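/- arXiv:2306.04406 — 2 statements merged into one kernel-verified Lean document; each statement's English description precedes it below -/
import Mathlib

section
/- Let (z_t)_{t≥1} be an orbit of the clipped shallow PLRNN z_t = A·z_{t−1} + W_1·[φ(W_2·z_{t−1} + h_2) − φ(W_2·z_{t−1})] + h_1, with A ∈ ℝ^{M×M}, W_1 ∈ ℝ^{M×L}, W_2 ∈ ℝ^{L×M}, h_2 ∈ ℝ^L, h_1 ∈ ℝ^M. Set h̄_max := √L · max_l |(h_2)_l|. Then for every T ≥ 1: ‖z_T‖₂ ≤ ‖A‖₂^{T−1}·‖z_1‖₂ + h̄_max·‖W_1‖₂·Σ_{j=0}^{T−2} ‖A‖₂^j + Σ_{j=0}^{T−2} ‖A‖₂^j·‖h_1‖₂, where ‖·‖₂ denotes the spectral norm for matrices and the Euclidean norm for vectors. -/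
/-- The spectral (operator 2-) norm of a real matrix: the operator norm of the
associated linear map between Euclidean spaces. -/
noncomputable def spec {m n : ℕ} (A : Matrix (Fin m) (Fin n) ℝ) : ℝ :=
  ‖LinearMap.toContinuousLinearMap (Matrix.toEuclideanLin A)‖

/-- The Euclidean (2-) norm of a real vector. -/
noncomputable def eunorm {n : ℕ} (v : Fin n → ℝ) : ℝ :=
  ‖(EuclideanSpace.equiv (Fin n) ℝ).symm v‖

/-- Componentwise ReLU nonlinearity `φ(x) = max(0, x)`. -/
def relu {n : ℕ} (v : Fin n → ℝ) : Fin n → ℝ := fun i => max 0 (v i)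

/-! A nonexpansive `φ` satisfies `‖φ (y + h₂) - φ y‖ ≤ ‖h₂‖` wherever `y` lies, so the clipped
hidden layer acts as a bounded forcing term and the norms of an orbit obey the affine recursion
`‖z (t + 1)‖ ≤ ‖A‖ * ‖z t‖ + (‖h₂‖ * ‖W‖ + ‖h₁‖)`, which the discrete Grönwall inequality solves.
For ReLU on Euclidean space it remains to compare `‖h₂‖₂` with `√L * max |h₂|`. -/

theorem discrete_gronwall_const {R : Type*} [CommSemiring R] [PartialOrder R] [IsOrderedRing R]
    {u : ℕ → R} {a b : R} {m : ℕ} (ha : 0 ≤ a) (hu : ∀ n, m ≤ n → u (n + 1) ≤ a * u n + b)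
    {n : ℕ} (hn : m ≤ n) :
    u n ≤ a ^ (n - m) * u m + b * ∑ j ∈ Finset.range (n - m), a ^ j := by
  have hprod := discrete_gronwall_prod_general hu (fun _ _ => ha) hn
  have hsum : ∑ k ∈ Finset.Ico m n, a ^ (n - (k + 1)) = ∑ j ∈ Finset.range (n - m), a ^ j := by
    rw [Finset.sum_Ico_eq_sum_range, ← Finset.sum_range_reflect]
    exact Finset.sum_congr rfl fun j hj => congrArg (a ^ ·) (by grind)
  simpa only [Finset.prod_const, Nat.card_Ico, ← Finset.mul_sum, hsum, mul_comm] using hprod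

theorem lipschitzWith_toLp_two_map {ι : Type*} [Fintype ι] {β γ : ι → Type*}
    [∀ i, SeminormedAddCommGroup (β i)] [∀ i, SeminormedAddCommGroup (γ i)]
    {K : NNReal} {f : ∀ i, β i → γ i} (hf : ∀ i, LipschitzWith K (f i)) :
    LipschitzWith K fun x : PiLp 2 β => (WithLp.toLp 2 fun i => f i (x i) : PiLp 2 γ) := by
  refine LipschitzWith.of_dist_le_mul fun x y => ?_
  refine (sq_le_sq₀ dist_nonneg (by positivity)).mp ?_
  calc dist (WithLp.toLp 2 fun i => f i (x i) : PiLp 2 γ) (WithLp.toLp 2 fun i => f i (y i)) ^ 2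
      = ∑ i, dist (f i (x i)) (f i (y i)) ^ 2 := PiLp.dist_sq_eq_of_L2 _ _
    _ ≤ ∑ i, (K * dist (x i) (y i)) ^ 2 := by
        gcongr with i
        exact (hf i).dist_le_mul _ _
    _ = (K * dist x y) ^ 2 := by
        simp only [mul_pow, PiLp.dist_sq_eq_of_L2, Finset.mul_sum]

theorem lipschitzWith_toLp_relu {n : ℕ} :
    LipschitzWith 1 fun x : EuclideanSpace ℝ (Fin n) => WithLp.toLp 2 (relu x.ofLp) :=
  lipschitzWith_toLp_two_map fun _ => LipschitzWith.id.const_max 0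

theorem norm_toLp_two_le_sqrt_card_mul {ι : Type*} [Fintype ι] {β : ι → Type*}
    [∀ i, SeminormedAddCommGroup (β i)] (v : ∀ i, β i) :
    ‖WithLp.toLp 2 v‖ ≤ √(Fintype.card ι) * ‖v‖ := by
  simpa [Real.sqrt_eq_rpow] using
    (PiLp.lipschitzWith_toLp 2 β).norm_le_mul (WithLp.toLp_zero 2) v

theorem eunorm_le_sqrt_mul_sup'_abs {n : ℕ} (v : Fin n → ℝ)
    (hn : (Finset.univ : Finset (Fin n)).Nonempty) :
    eunorm v ≤ √n * Finset.univ.sup' hn (fun i => |v i|) := by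
  have : Nonempty (Fin n) := Finset.univ_nonempty_iff.mp hn
  have hsup : ‖v‖ ≤ Finset.univ.sup' hn (fun i => |v i|) :=
    (pi_norm_le_iff_of_nonempty v).mpr fun i =>
      Finset.le_sup' (fun i => |v i|) (Finset.mem_univ i)
  calc eunorm v
      ≤ √(Fintype.card (Fin n)) * ‖v‖ := norm_toLp_two_le_sqrt_card_mul v
    _ ≤ √n * Finset.univ.sup' hn (fun i => |v i|) := by
        rw [Fintype.card_fin]
        gcongr

section NormedSpace

variable {𝕜 E F : Type*} [NontriviallyNormedField 𝕜]
  [SeminormedAddCommGroup E] [NormedSpace 𝕜 E] [SeminormedAddCommGroup F] [NormedSpace 𝕜 F]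

theorem norm_clipped_step_le (A : E →L[𝕜] E) (W : F →L[𝕜] E) {φ : F → F}
    (hφ : LipschitzWith 1 φ) (x h₁ : E) (y h₂ : F) :
    ‖A x + W (φ (y + h₂) - φ y) + h₁‖ ≤ ‖A‖ * ‖x‖ + (‖h₂‖ * ‖W‖ + ‖h₁‖) := by
  have hclip : ‖φ (y + h₂) - φ y‖ ≤ ‖h₂‖ := by
    simpa [dist_eq_norm] using hφ.dist_le_mul (y + h₂) y
  calc ‖A x + W (φ (y + h₂) - φ y) + h₁‖
      ≤ ‖A x‖ + ‖W (φ (y + h₂) - φ y)‖ + ‖h₁‖ := norm_add₃_le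
    _ ≤ ‖A‖ * ‖x‖ + ‖W‖ * ‖h₂‖ + ‖h₁‖ := by
        gcongr
        · exact A.le_opNorm x
        · exact W.le_opNorm_of_le hclip
    _ = ‖A‖ * ‖x‖ + (‖h₂‖ * ‖W‖ + ‖h₁‖) := by ring

/-- The sequence `y` plays the role of the pre-activations `W₂ z_t`. -/
theorem clipped_shPLRNN_orbit_norm_bound_general (A : E →L[𝕜] E) (W : F →L[𝕜] E) {φ : F → F}
    (hφ : LipschitzWith 1 φ) (h₂ : F) (h₁ : E) (y : ℕ → F) (z : ℕ → E)
    (hz : ∀ t, 1 ≤ t → z (t + 1) = A (z t) + W (φ (y t + h₂) - φ (y t)) + h₁)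
    (T : ℕ) (hT : 1 ≤ T) :
    ‖z T‖ ≤ ‖A‖ ^ (T - 1) * ‖z 1‖ + ‖h₂‖ * ‖W‖ * ∑ j ∈ Finset.range (T - 1), ‖A‖ ^ j
      + ∑ j ∈ Finset.range (T - 1), ‖A‖ ^ j * ‖h₁‖ := by
  have hstep (t : ℕ) (ht : 1 ≤ t) :
      ‖z (t + 1)‖ ≤ ‖A‖ * ‖z t‖ + (‖h₂‖ * ‖W‖ + ‖h₁‖) := by
    rw [hz t ht]
    exact norm_clipped_step_le A W hφ (z t) h₁ (y t) h₂
  calc ‖z T‖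
      ≤ ‖A‖ ^ (T - 1) * ‖z 1‖
          + (‖h₂‖ * ‖W‖ + ‖h₁‖) * ∑ j ∈ Finset.range (T - 1), ‖A‖ ^ j :=
        discrete_gronwall_const (u := fun t => ‖z t‖) (norm_nonneg A) hstep hT
    _ = _ := by
        rw [← Finset.sum_mul]
        ring

end NormedSpace

/-- For any orbit `(z_t)_{t ≥ 1}` of the clipped shallow PLRNN
`z_t = A z_{t-1} + W₁ [φ(W₂ z_{t-1} + h₂) - φ(W₂ z_{t-1})] + h₁`, and every `T ≥ 1`,
`‖z_T‖₂ ≤ ‖A‖₂^{T-1} ‖z_1‖₂ + h̄_max ‖W₁‖₂ ∑_{j=0}^{T-2} ‖A‖₂^j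
  + ∑_{j=0}^{T-2} ‖A‖₂^j ‖h₁‖₂`, where `h̄_max = √L · max_l |(h₂)_l|`. -/
theorem clipped_shPLRNN_orbit_norm_bound {M L : ℕ} (hL : 0 < L)
    (A : Matrix (Fin M) (Fin M) ℝ) (W1 : Matrix (Fin M) (Fin L) ℝ)
    (W2 : Matrix (Fin L) (Fin M) ℝ) (h2 : Fin L → ℝ) (h1 : Fin M → ℝ)
    (z : ℕ → Fin M → ℝ)
    (hz : ∀ t, 1 ≤ t →
      z (t + 1) = A.mulVec (z t)
        + W1.mulVec (relu (W2.mulVec (z t) + h2) - relu (W2.mulVec (z t))) + h1) :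
    ∀ T, 1 ≤ T →
      eunorm (z T)
        ≤ spec A ^ (T - 1) * eunorm (z 1)
          + (Real.sqrt L * Finset.univ.sup' ⟨⟨0, hL⟩, Finset.mem_univ _⟩ (fun l => |h2 l|))
              * spec W1 * ∑ j ∈ Finset.range (T - 1), spec A ^ j
          + ∑ j ∈ Finset.range (T - 1), spec A ^ j * eunorm h1 := by
  intro T hT
  have hA : 0 ≤ spec A := norm_nonneg _
  have hW1 : 0 ≤ spec W1 := norm_nonneg _
  calc eunorm (z T)
      ≤ spec A ^ (T - 1) * eunorm (z 1)
          + eunorm h2 * spec W1 * ∑ j ∈ Finset.range (T - 1), spec A ^ j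
          + ∑ j ∈ Finset.range (T - 1), spec A ^ j * eunorm h1 :=
        clipped_shPLRNN_orbit_norm_bound_general
          (Matrix.toEuclideanLin A).toContinuousLinearMap
          (Matrix.toEuclideanLin W1).toContinuousLinearMap lipschitzWith_toLp_relu
          (WithLp.toLp 2 h2) (WithLp.toLp 2 h1) (fun t => WithLp.toLp 2 (W2.mulVec (z t)))
          (fun t => WithLp.toLp 2 (z t)) (fun t ht => congrArg (WithLp.toLp 2) (hz t ht)) T hT
    _ ≤ _ := by
        gcongr
        exact eunorm_le_sqrt_mul_sup'_abs h2 _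
end

section
/- If ‖A‖₂ < 1, where ‖·‖₂ is the spectral norm, then every orbit of the clipped shallow PLRNN z_t = A·z_{t−1} + W_1·[φ(W_2·z_{t−1} + h_2) − φ(W_2·z_{t−1})] + h_1 is bounded; moreover, setting h̄_max := √L · max_l |(h_2)_l|, every orbit satisfies limsup_{T→∞} ‖z_T‖₂ ≤ (h̄_max·‖W_1‖₂ + ‖h_1‖₂) / (1 − ‖A‖₂) < ∞. -/
/-!
Adding the bias `h₂` before a Lipschitz nonlinearity `φ` moves the output by at most
`Lip(φ) ‖h₂‖₂`, whatever the state. The map is therefore the contraction `z ↦ A z` plus a uniformly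
bounded input, and `‖z_t‖₂` obeys `x_{t+1} ≤ a x_t + b` with `a = ‖A‖₂ < 1`. Its excess over the
fixed point `b / (1 - a)` decays at least geometrically.
-/

open Filter Topology
open scoped NNReal Matrix

section AffineRecursion

variable {x : ℕ → ℝ} {a b : ℝ}

theorem le_pow_mul_add_of_le_mul_add (ha₀ : 0 ≤ a) (ha₁ : a ≠ 1)
    (hx : ∀ n, x (n + 1) ≤ a * x n + b) (n : ℕ) :
    x n ≤ a ^ n * (x 0 - b / (1 - a)) + b / (1 - a) := by
  have fixed_point : a * (b / (1 - a)) + b = b / (1 - a) := by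
    have : 1 - a ≠ 0 := sub_ne_zero.mpr ha₁.symm
    field_simp
    ring
  have excess_le : x n - b / (1 - a) ≤ a ^ n * (x 0 - b / (1 - a)) :=
    le_geom (u := fun k ↦ x k - b / (1 - a)) ha₀ n fun k _ ↦ by linarith [hx k, fixed_point]
  exact sub_le_iff_le_add.mp excess_le

theorem tendsto_pow_mul_add_of_lt_one (ha₀ : 0 ≤ a) (ha₁ : a < 1) (c d : ℝ) :
    Tendsto (fun n : ℕ ↦ a ^ n * c + d) atTop (𝓝 d) := by
  simpa using ((tendsto_pow_atTop_nhds_zero_of_lt_one ha₀ ha₁).mul_const c).add_const d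

theorem bddAbove_range_of_le_mul_add (ha₀ : 0 ≤ a) (ha₁ : a < 1)
    (hx : ∀ n, x (n + 1) ≤ a * x n + b) : BddAbove (Set.range x) :=
  (tendsto_pow_mul_add_of_lt_one ha₀ ha₁ _ _).bddAbove_range.range_mono _
    (le_pow_mul_add_of_le_mul_add ha₀ ha₁.ne hx)

theorem limsup_le_of_le_mul_add (ha₀ : 0 ≤ a) (ha₁ : a < 1)
    (hx : ∀ n, x (n + 1) ≤ a * x n + b) (hcobdd : IsCoboundedUnder (· ≤ ·) atTop x) :
    limsup x atTop ≤ b / (1 - a) := by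
  have hlim := tendsto_pow_mul_add_of_lt_one ha₀ ha₁ (x 0 - b / (1 - a)) (b / (1 - a))
  rw [← hlim.limsup_eq]
  exact limsup_le_limsup (.of_forall (le_pow_mul_add_of_le_mul_add ha₀ ha₁.ne hx)) hcobdd
    hlim.isBoundedUnder_le

end AffineRecursion

section EuclideanNorm

variable {m n : ℕ}

theorem spec_nonneg (A : Matrix (Fin m) (Fin n) ℝ) : 0 ≤ spec A :=
  norm_nonneg _

theorem eunorm_nonneg (v : Fin n → ℝ) : 0 ≤ eunorm v :=
  norm_nonneg _

theorem eunorm_add_le (v w : Fin n → ℝ) : eunorm (v + w) ≤ eunorm v + eunorm w :=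
  norm_add_le (WithLp.toLp 2 v) (WithLp.toLp 2 w)

theorem eunorm_smul (c : ℝ) (v : Fin n → ℝ) : eunorm (c • v) = |c| * eunorm v :=
  norm_smul c (WithLp.toLp 2 v)

theorem eunorm_mulVec_le (A : Matrix (Fin m) (Fin n) ℝ) (v : Fin n → ℝ) :
    eunorm (A *ᵥ v) ≤ spec A * eunorm v :=
  (Matrix.toEuclideanLin A).toContinuousLinearMap.le_opNorm (WithLp.toLp 2 v)

theorem eunorm_eq_sqrt_sum_sq (v : Fin n → ℝ) : eunorm v = √(∑ i, v i ^ 2) := by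
  simp [eunorm, EuclideanSpace.norm_eq]

theorem eunorm_le_eunorm_of_abs_le {v w : Fin n → ℝ} (h : ∀ i, |v i| ≤ |w i|) :
    eunorm v ≤ eunorm w := by
  simp only [eunorm_eq_sqrt_sum_sq]
  exact Real.sqrt_le_sqrt (Finset.sum_le_sum fun i _ ↦ sq_le_sq.mpr (h i))

theorem eunorm_const (c : ℝ) : eunorm (fun _ : Fin n ↦ c) = √n * |c| := by
  simp [eunorm_eq_sqrt_sum_sq, Real.sqrt_sq_eq_abs]

theorem eunorm_le_sqrt_mul_sup' (h : (Finset.univ : Finset (Fin n)).Nonempty) (v : Fin n → ℝ) :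
    eunorm v ≤ √n * Finset.univ.sup' h fun i ↦ |v i| := by
  have abs_le_sup' (i : Fin n) : |v i| ≤ Finset.univ.sup' h fun i ↦ |v i| :=
    Finset.le_sup' (fun i ↦ |v i|) (Finset.mem_univ i)
  have sup'_nonneg : 0 ≤ Finset.univ.sup' h fun i ↦ |v i| :=
    (abs_nonneg _).trans (abs_le_sup' h.choose)
  calc eunorm v
      ≤ eunorm fun _ : Fin n ↦ Finset.univ.sup' h fun i ↦ |v i| :=
        eunorm_le_eunorm_of_abs_le fun i ↦ (abs_le_sup' i).trans (le_abs_self _)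
    _ = √n * Finset.univ.sup' h fun i ↦ |v i| := by rw [eunorm_const, abs_of_nonneg sup'_nonneg]

theorem eunorm_comp_add_sub_comp_le {K : ℝ≥0} {φ : ℝ → ℝ} (hφ : LipschitzWith K φ)
    (u h : Fin n → ℝ) : eunorm (φ ∘ (u + h) - φ ∘ u) ≤ K * eunorm h :=
  calc eunorm (φ ∘ (u + h) - φ ∘ u)
      ≤ eunorm ((K : ℝ) • h) := eunorm_le_eunorm_of_abs_le fun i ↦ by
        simpa [abs_mul, Real.dist_eq] using hφ.dist_le_mul (u i + h i) (u i)
    _ = K * eunorm h := by rw [eunorm_smul, NNReal.abs_eq]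

end EuclideanNorm

theorem eunorm_clipped_step_le {M N L : ℕ} {K : ℝ≥0} {φ : ℝ → ℝ} (hφ : LipschitzWith K φ)
    (A : Matrix (Fin M) (Fin N) ℝ) (W1 : Matrix (Fin M) (Fin L) ℝ) (h2 : Fin L → ℝ)
    (h1 : Fin M → ℝ) (z : Fin N → ℝ) (u : Fin L → ℝ) :
    eunorm (A *ᵥ z + W1 *ᵥ (φ ∘ (u + h2) - φ ∘ u) + h1)
      ≤ spec A * eunorm z + (K * eunorm h2 * spec W1 + eunorm h1) :=
  calc eunorm (A *ᵥ z + W1 *ᵥ (φ ∘ (u + h2) - φ ∘ u) + h1)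
      ≤ eunorm (A *ᵥ z) + eunorm (W1 *ᵥ (φ ∘ (u + h2) - φ ∘ u)) + eunorm h1 :=
        (eunorm_add_le _ _).trans (by gcongr; exact eunorm_add_le _ _)
    _ ≤ spec A * eunorm z + spec W1 * (K * eunorm h2) + eunorm h1 := by
        gcongr
        · exact eunorm_mulVec_le A z
        · exact (eunorm_mulVec_le W1 _).trans
            (mul_le_mul_of_nonneg_left (eunorm_comp_add_sub_comp_le hφ u h2) (spec_nonneg W1))
    _ = spec A * eunorm z + (K * eunorm h2 * spec W1 + eunorm h1) := by ring

theorem clipped_shPLRNN_orbit_bounded_general {M L : ℕ} {K : ℝ≥0} {φ : ℝ → ℝ}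
    (hφ : LipschitzWith K φ) (A : Matrix (Fin M) (Fin M) ℝ) (W1 : Matrix (Fin M) (Fin L) ℝ)
    (h2 : Fin L → ℝ) (h1 : Fin M → ℝ) (hA : spec A < 1) (z : ℕ → Fin M → ℝ) (u : ℕ → Fin L → ℝ)
    (hz : ∀ t, z (t + 1) = A *ᵥ z t + W1 *ᵥ (φ ∘ (u t + h2) - φ ∘ u t) + h1) :
    (∃ C : ℝ, ∀ T, eunorm (z T) ≤ C)
    ∧ limsup (fun T ↦ eunorm (z T)) atTop
        ≤ (K * eunorm h2 * spec W1 + eunorm h1) / (1 - spec A) := by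
  have hstep (t : ℕ) : eunorm (z (t + 1))
      ≤ spec A * eunorm (z t) + (K * eunorm h2 * spec W1 + eunorm h1) :=
    hz t ▸ eunorm_clipped_step_le hφ A W1 h2 h1 (z t) (u t)
  obtain ⟨C, hC⟩ : BddAbove (Set.range fun T ↦ eunorm (z T)) :=
    bddAbove_range_of_le_mul_add (spec_nonneg A) hA hstep
  exact ⟨⟨C, Set.forall_mem_range.mp hC⟩, limsup_le_of_le_mul_add (spec_nonneg A) hA hstep
    (isCoboundedUnder_le_of_le atTop fun T ↦ eunorm_nonneg (z T))⟩

/-- If `‖A‖₂ < 1`, then every orbit of the clipped shallow PLRNN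
`z_t = A z_{t-1} + W₁ [φ(W₂ z_{t-1} + h₂) - φ(W₂ z_{t-1})] + h₁` is bounded; moreover,
with `h̄_max = √L · max_l |(h₂)_l|`,
`limsup_{T→∞} ‖z_T‖₂ ≤ (h̄_max ‖W₁‖₂ + ‖h₁‖₂) / (1 - ‖A‖₂)`. -/
theorem clipped_shPLRNN_orbit_bounded {M L : ℕ} (hL : 0 < L)
    (A : Matrix (Fin M) (Fin M) ℝ) (W1 : Matrix (Fin M) (Fin L) ℝ)
    (W2 : Matrix (Fin L) (Fin M) ℝ) (h2 : Fin L → ℝ) (h1 : Fin M → ℝ)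
    (hA : spec A < 1)
    (z : ℕ → Fin M → ℝ)
    (hz : ∀ t,
      z (t + 1) = A.mulVec (z t)
        + W1.mulVec (relu (W2.mulVec (z t) + h2) - relu (W2.mulVec (z t))) + h1) :
    (∃ C : ℝ, ∀ T, eunorm (z T) ≤ C)
    ∧ Filter.limsup (fun T => eunorm (z T)) Filter.atTop
        ≤ ((Real.sqrt L * Finset.univ.sup' ⟨⟨0, hL⟩, Finset.mem_univ _⟩ (fun l => |h2 l|))
              * spec W1 + eunorm h1) / (1 - spec A) := by
  refine (clipped_shPLRNN_orbit_bounded_general (LipschitzWith.id.const_max 0) A W1 h2 h1 hA z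
    (fun t ↦ W2 *ᵥ z t) hz).imp_right fun hlimsup ↦ hlimsup.trans ?_
  rw [NNReal.coe_one, one_mul]
  gcongr
  exacts [spec_nonneg W1, eunorm_le_sqrt_mul_sup' _ h2]
end
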